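/- arXiv:1108.5930 — 2 statements merged into one kernel-verified Lean document; each statement's English description precedes it below -/
import Mathlib

section
/- Let L be a linear pencil in n variables. Then the spectrahedron S_L is bounded (as a subset of ℝⁿ) if and only if the quadratic module M_L associated to L is archimedean. -/
/-!
If `M_L` is archimedean, then `N - X_i ^ 2 ∈ M_L` is nonnegative on `S_L`, which bounds `S_L`.

For the converse, call `g` infinitesimal if `h * g + ε ∈ M_L` for all polynomials `h` and all
`ε > 0`. Adding the ideal of infinitesimals to `M_L` gives a quadratic module `M` with radical
support, and `f ∈ M` still implies `f + ε ∈ M_L` for all `ε > 0`. Radicality yields a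
Cauchy-Schwarz property: if a constant vector `v` satisfies `vᵀ L v ∈ M ∩ -M`, then
`vᵀ L w ∈ M ∩ -M` for all `w`. Let `K` be the cone of affine polynomials in `M`, a cone that need
not be closed, and suppose `p ∉ K`. When `v` runs over the unit sphere of a complement of the
kernel of `vᵀ L w` modulo the lineality space of `K`, the values `vᵀ L v` form a compact set that
avoids this lineality space. Hence some linear functional is positive on these values, on `1` and
on `-p`, and vanishes on the lineality space. Up to scaling it is the evaluation at a point of
`S_L` at which `p` is negative, so affine polynomials nonnegative on `S_L` belong to `M`.

If `S_L` is bounded, this puts `N + X_i` and `N - X_i` into `M_L` for large `N`, and the elements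
bounded with respect to a quadratic module form a subalgebra.
-/

open MvPolynomial Matrix

/-- The linear pencil `L = A 0 + X 1 * A 1 + ... + X n * A n` as a symmetric matrix
with entries in the polynomial ring `ℝ[X 1, ..., X n]`. -/
noncomputable def pencilPoly {n m : ℕ} (A : Fin (n+1) → Matrix (Fin m) (Fin m) ℝ) :
    Matrix (Fin m) (Fin m) (MvPolynomial (Fin n) ℝ) :=
  fun a b => MvPolynomial.C (A 0 a b) + ∑ i : Fin n, MvPolynomial.X i * MvPolynomial.C (A i.succ a b)

/-- Evaluation of the pencil at a point `x ∈ ℝⁿ`. -/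
def pencilEval {n m : ℕ} (A : Fin (n+1) → Matrix (Fin m) (Fin m) ℝ) (x : Fin n → ℝ) :
    Matrix (Fin m) (Fin m) ℝ :=
  A 0 + ∑ i : Fin n, x i • A i.succ

/-- The spectrahedron `S_L = {x ∈ ℝⁿ ∣ L(x) ⪰ 0}`. -/
def specSet {n m : ℕ} (A : Fin (n+1) → Matrix (Fin m) (Fin m) ℝ) : Set (Fin n → ℝ) :=
  {x | (pencilEval A x).PosSemidef}

/-- `vᵀ L v` for a vector `v` of polynomials. -/
noncomputable def vLv {n m : ℕ} (A : Fin (n+1) → Matrix (Fin m) (Fin m) ℝ)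
    (v : Fin m → MvPolynomial (Fin n) ℝ) : MvPolynomial (Fin n) ℝ :=
  ∑ a : Fin m, ∑ b : Fin m, v a * pencilPoly A a b * v b

/-- Membership in the quadratic module `M_L` associated to the pencil `L`:
`p = s + Σⱼ vⱼᵀ L vⱼ` with `s` a sum of squares. -/
def memQM {n m : ℕ} (A : Fin (n+1) → Matrix (Fin m) (Fin m) ℝ)
    (p : MvPolynomial (Fin n) ℝ) : Prop :=
  ∃ (k r : ℕ) (q : Fin k → MvPolynomial (Fin n) ℝ)
    (v : Fin r → Fin m → MvPolynomial (Fin n) ℝ),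
    p = ∑ i, (q i)^2 + ∑ j, vLv A (v j)

/-- The quadratic module `M_L` is archimedean: for every polynomial `f` there is `N ∈ ℕ`
with `N - f² ∈ M_L`. -/
def archimedeanQM {n m : ℕ} (A : Fin (n+1) → Matrix (Fin m) (Fin m) ℝ) : Prop :=
  ∀ f : MvPolynomial (Fin n) ℝ, ∃ N : ℕ, memQM A ((N : MvPolynomial (Fin n) ℝ) - f^2)

section ConvexHull

variable {𝕜 E : Type*} [Field 𝕜] [LinearOrder 𝕜] [IsStrictOrderedRing 𝕜] [AddCommGroup E]
  [Module 𝕜 E] [FiniteDimensional 𝕜 E]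

theorem convexHull_eq_iUnion_image_stdSimplex (s : Set E) :
    convexHull 𝕜 s = ⋃ k : Fin (Module.finrank 𝕜 E + 2),
      (fun y : (Fin k → 𝕜) × (Fin k → E) => ∑ i, y.1 i • y.2 i) ''
        (stdSimplex 𝕜 (Fin k) ×ˢ Set.univ.pi fun _ => s) := by
  refine Set.Subset.antisymm (fun x hx => ?_) (Set.iUnion_subset fun k => ?_)
  · obtain ⟨κ, _, z, w, hz, hind, hw, hw1, rfl⟩ := eq_pos_convex_span_of_mem_convexHull hx
    have hcard : Fintype.card κ < Module.finrank 𝕜 E + 2 :=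
      Nat.lt_succ_of_le (hind.card_le_finrank_succ.trans
        (Nat.succ_le_succ (Submodule.finrank_le _)))
    let e := (Fintype.equivFin κ).symm
    refine Set.mem_iUnion.2 ⟨⟨_, hcard⟩, (w ∘ e, z ∘ e),
      ⟨⟨fun i => (hw (e i)).le, ?_⟩, fun i _ => hz (Set.mem_range_self (e i))⟩, ?_⟩
    · exact (e.sum_comp w).trans hw1
    · exact e.sum_comp fun k => w k • z k
  · rintro _ ⟨⟨w, z⟩, ⟨⟨hw, hw1⟩, hz⟩, rfl⟩
    exact (convex_convexHull 𝕜 s).sum_mem (fun i _ => hw i) hw1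
      fun i _ => subset_convexHull 𝕜 s (hz i trivial)

end ConvexHull

section Separation

variable {V : Type*} [AddCommGroup V] [Module ℝ V]

theorem isCompact_convexHull_of_finiteDimensional [TopologicalSpace V] [ContinuousAdd V]
    [ContinuousSMul ℝ V] [FiniteDimensional ℝ V] {s : Set V} (hs : IsCompact s) :
    IsCompact (convexHull ℝ s) := by
  rw [convexHull_eq_iUnion_image_stdSimplex]
  exact isCompact_iUnion fun k =>
    ((isCompact_stdSimplex ℝ _).prod (isCompact_univ_pi fun _ => hs)).image (by fun_prop)

theorem convex_diff_lineal (K : PointedCone ℝ V) : Convex ℝ ((K : Set V) \ K.lineal) := by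
  rintro y ⟨hyK, hy⟩ z ⟨hzK, hz⟩ a b ha hb hab
  have haK := K.smul_mem ha hyK
  have hbK := K.smul_mem hb hzK
  refine ⟨K.add_mem haK hbK, fun h => ?_⟩
  rcases ha.eq_or_lt with rfl | ha
  · obtain rfl : b = 1 := by simpa using hab
    exact hz (by simpa using h)
  · exact hy ((PointedCone.IsFaceOf.lineal K).mem_of_smul_add_mem hyK hbK ha h)

theorem lineal_sup_hull_neg {K : PointedCone ℝ V} {p : V} (hp : p ∉ K) :
    (K ⊔ PointedCone.hull ℝ {-p}).lineal = K.lineal := by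
  refine le_antisymm (fun y ⟨hy, hy'⟩ => ?_) fun y ⟨hy, hy'⟩ =>
    ⟨Submodule.mem_sup_left hy, Submodule.mem_sup_left hy'⟩
  obtain ⟨k, hk, _, hq, hkq⟩ := Submodule.mem_sup.1 hy
  obtain ⟨l, hl, _, hr, hlr⟩ := Submodule.mem_sup.1 hy'
  obtain ⟨⟨t, ht⟩, rfl⟩ := Submodule.mem_span_singleton.1 hq
  obtain ⟨⟨s, hs⟩, rfl⟩ := Submodule.mem_span_singleton.1 hr
  rw [Nonneg.mk_smul] at hkq hlr
  have hsum : (t + s) • p = k + l := by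
    have h : k + t • -p + (l + s • -p) = 0 := by rw [hkq, hlr, add_neg_cancel]
    rw [eq_comm, ← sub_eq_zero, ← h]
    module
  have hts : t + s = 0 := by
    by_contra hne
    refine hp ?_
    rw [← inv_smul_smul₀ hne p, hsum]
    exact K.smul_mem (inv_nonneg.2 (add_nonneg ht hs)) (K.add_mem hk hl)
  obtain ⟨rfl, rfl⟩ := (add_eq_zero_iff_of_nonneg ht hs).1 hts
  rw [zero_smul, add_zero] at hkq hlr
  exact PointedCone.mem_lineal.2 ⟨hkq ▸ hk, hlr ▸ hl⟩

theorem exists_forall_pos_of_isCompact_of_subset_diff_lineal [TopologicalSpace V]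
    [IsTopologicalAddGroup V] [ContinuousSMul ℝ V] [LocallyConvexSpace ℝ V] [T2Space V]
    [FiniteDimensional ℝ V] {K : PointedCone ℝ V} {G : Set V} (hG : IsCompact G)
    (hGK : G ⊆ K \ K.lineal) :
    ∃ φ : V →L[ℝ] ℝ, (∀ y ∈ K.lineal, φ y = 0) ∧ ∀ y ∈ G, 0 < φ y := by
  have hdisj : Disjoint (K.lineal : Set V) (convexHull ℝ G) :=
    Set.disjoint_right.2 fun y hy => (convexHull_min hGK (convex_diff_lineal K) hy).2
  obtain ⟨φ, u, u', hφK, huu', hφG⟩ := geometric_hahn_banach_closed_compact K.lineal.convex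
    K.lineal.closed_of_finiteDimensional (convex_convexHull ℝ G)
    (isCompact_convexHull_of_finiteDimensional hG) hdisj
  have hu : 0 < u := by simpa using hφK 0 K.lineal.zero_mem
  refine ⟨φ, fun y hy => ?_, fun y hy => ?_⟩
  · by_contra hne
    have h := hφK ((u / φ y) • y) (K.lineal.smul_mem _ hy)
    rw [map_smul, smul_eq_mul, div_mul_cancel₀ _ hne] at h
    exact h.false
  · linarith [hφG y (subset_convexHull ℝ G hy)]

end Separation

section Form

variable {U V : Type*} [NormedAddCommGroup U] [NormedSpace ℝ U]

theorem apply_self_nonneg_of_pos_on_sphere {b : LinearMap.BilinForm ℝ U} (hb : b.IsSymm)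
    {W : Submodule ℝ U} (hW : Codisjoint (LinearMap.ker b) W)
    (hpos : ∀ w ∈ Metric.sphere 0 1 ∩ (W : Set U), 0 < b w w) (v : U) : 0 ≤ b v v := by
  obtain ⟨u, w, hu, hw, rfl⟩ := Submodule.codisjoint_iff_exists_add_eq.1 hW v
  have hbu : b u = 0 := hu
  have hker : b (u + w) (u + w) = b w w := by
    simp [hbu, hb.eq w u]
  rw [hker]
  rcases eq_or_ne w 0 with rfl | hw0
  · simp
  · have hnorm : ‖w‖ ≠ 0 := norm_ne_zero_iff.2 hw0
    have hunit := hpos (‖w‖⁻¹ • w) ⟨by simp [norm_smul, hnorm], W.smul_mem _ hw⟩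
    have hscale : b w w = ‖w‖ ^ 2 * b (‖w‖⁻¹ • w) (‖w‖⁻¹ • w) := by
      simp only [map_smul, LinearMap.smul_apply, smul_eq_mul]
      field_simp
    rw [hscale]
    positivity

variable [FiniteDimensional ℝ U] [NormedAddCommGroup V] [NormedSpace ℝ V] [FiniteDimensional ℝ V]

theorem exists_pos_neg_nonneg_of_notMem {K : PointedCone ℝ V} {B : U →ₗ[ℝ] U →ₗ[ℝ] V}
    (hB : ∀ v w, B v w = B w v) (hBK : ∀ v, B v v ∈ K)
    (hker : ∀ v, B v v ∈ K.lineal → ∀ w, B v w ∈ K.lineal) {e p : V} (he : e ∈ K)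
    (he' : -e ∉ K) (hp : p ∉ K) :
    ∃ φ : V →L[ℝ] ℝ, 0 < φ e ∧ φ p < 0 ∧ ∀ v, 0 ≤ φ (B v v) := by
  let N : Submodule ℝ U := LinearMap.ker (B.compr₂ K.lineal.mkQ)
  have hN {v : U} : v ∈ N ↔ ∀ w, B v w ∈ K.lineal := by
    simp only [N, LinearMap.mem_ker, LinearMap.ext_iff, LinearMap.compr₂_apply,
      Submodule.mkQ_apply, Submodule.Quotient.mk_eq_zero, LinearMap.zero_apply]
  obtain ⟨W, hNW⟩ := N.exists_isCompl
  let G : Set V := insert (-p) (insert e ((fun w => B w w) '' (Metric.sphere 0 1 ∩ W)))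
  have hG : IsCompact G := by
    have hcont : Continuous fun w => B w w :=
      B.toContinuousBilinearMap.continuous.clm_apply continuous_id
    exact ((((isCompact_sphere 0 1).inter_right W.closed_of_finiteDimensional).image
      hcont).insert e).insert (-p)
  let K' := K ⊔ PointedCone.hull ℝ {-p}
  have hlin : K'.lineal = K.lineal := lineal_sup_hull_neg hp
  have hKK' : K ≤ K' := le_sup_left
  have hGK' : G ⊆ (K' : Set V) \ K'.lineal := by
    rw [hlin]
    rintro y (rfl | rfl | ⟨w, ⟨hw1, hwW⟩, rfl⟩)
    · exact ⟨Submodule.mem_sup_right (PointedCone.subset_hull rfl),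
        fun h => hp (by simpa using h.2)⟩
    · exact ⟨hKK' he, fun h => he' h.2⟩
    · refine ⟨hKK' (hBK w), fun h => ?_⟩
      have hw0 : w = 0 := Submodule.disjoint_def.1 hNW.disjoint w (hN.2 (hker w h)) hwW
      simp [hw0] at hw1
  obtain ⟨φ, hφK, hφG⟩ := exists_forall_pos_of_isCompact_of_subset_diff_lineal hG hGK'
  have hφN : N ≤ LinearMap.ker (B.compr₂ φ.toLinearMap) := fun v hv =>
    LinearMap.ext fun w => hφK _ (hlin ▸ hN.1 hv w)
  refine ⟨φ, hφG e (by simp [G]), by simpa using hφG (-p) (by simp [G]), ?_⟩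
  refine apply_self_nonneg_of_pos_on_sphere (b := B.compr₂ φ.toLinearMap)
    ⟨fun v w => by simp [hB v w]⟩ (hNW.codisjoint.mono_left hφN) fun w hw => ?_
  exact hφG _ (.inr (.inr ⟨w, hw, rfl⟩))

end Form

/-- A quadratic module of a commutative ring `R`: an additive submonoid that contains `1` and is
closed under multiplication by squares. It is not required to be proper. -/
structure QuadraticModule (R : Type*) [CommRing R] extends AddSubmonoid R where
  one_mem' : 1 ∈ carrier
  sq_mul_mem' (a : R) {f : R} (hf : f ∈ carrier) : a ^ 2 * f ∈ carrier

namespace QuadraticModule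

section CommRing

variable {R : Type*} [CommRing R]

instance : SetLike (QuadraticModule R) R where
  coe M := M.carrier
  coe_injective M N h := by cases M; cases N; congr; exact SetLike.ext' h

instance : PartialOrder (QuadraticModule R) := .ofSetLike (QuadraticModule R) R

instance : AddSubmonoidWithOneClass (QuadraticModule R) R where
  zero_mem M := M.zero_mem'
  one_mem M := M.one_mem'
  add_mem {M} := M.add_mem'

variable (M : QuadraticModule R)

theorem sq_mul_mem (a : R) {f : R} (hf : f ∈ M) : a ^ 2 * f ∈ M := M.sq_mul_mem' a hf

theorem sq_mem (a : R) : a ^ 2 ∈ M := by simpa using M.sq_mul_mem a (one_mem M)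

end CommRing

variable {R : Type*} [CommRing R] [Algebra ℝ R] (M : QuadraticModule R)

theorem smul_mem {c : ℝ} (hc : 0 ≤ c) {f : R} (hf : f ∈ M) : c • f ∈ M := by
  rw [← Real.sq_sqrt hc, Algebra.smul_def, map_pow]
  exact M.sq_mul_mem _ hf

theorem algebraMap_mem {c : ℝ} (hc : 0 ≤ c) : algebraMap ℝ R c ∈ M := by
  rw [Algebra.algebraMap_eq_smul_one]
  exact M.smul_mem hc (one_mem M)

/-- A quadratic module of a real algebra, regarded as a convex cone. -/
def toPointedCone : PointedCone ℝ R where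
  __ := M.toAddSubmonoid
  smul_mem' c _ hf := M.smul_mem c.2 hf

/-- The support `M ∩ -M` of a quadratic module, as an ideal. -/
noncomputable def support : Ideal R where
  __ := M.toPointedCone.lineal.toAddSubmonoid
  smul_mem' h f hf := by
    have hmul (a : R) : a * f ∈ M := by
      have hdecomp : a * f = (1 / 4 : ℝ) • ((a + 1) ^ 2 * f + (a - 1) ^ 2 * -f) := by algebra
      rw [hdecomp]
      exact M.smul_mem (by norm_num) (add_mem (M.sq_mul_mem _ hf.1) (M.sq_mul_mem _ hf.2))
    exact ⟨hmul h, show -(h * f) ∈ M by simpa only [neg_mul] using hmul (-h)⟩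

variable {M} in
theorem mem_support {f : R} : f ∈ M.support ↔ f ∈ M ∧ -f ∈ M := .rfl

theorem mem_of_neg_one_mem (h : -1 ∈ M) (f : R) : f ∈ M := by
  have htop : M.support = ⊤ := (Ideal.eq_top_iff_one _).2 ⟨one_mem M, h⟩
  have hf : f ∈ M.support := htop ▸ Submodule.mem_top
  exact hf.1

/-- The elements bounded with respect to `M`: those `f` with `N - f ^ 2 ∈ M` for some `N : ℕ`.
The quadratic module `M` is archimedean when this subalgebra is `⊤`. -/
def boundedSubalgebra : Subalgebra ℝ R where
  carrier := {f | ∃ N : ℕ, (N : R) - f ^ 2 ∈ M}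
  add_mem' := by
    rintro f g ⟨N, hf⟩ ⟨N', hg⟩
    refine ⟨2 * N + 2 * N', ?_⟩
    have hdecomp : ((2 * N + 2 * N' : ℕ) : R) - (f + g) ^ 2 =
        2 • (N - f ^ 2) + 2 • (N' - g ^ 2) + (f - g) ^ 2 := by
      push_cast
      ring
    rw [hdecomp]
    exact add_mem (add_mem (nsmul_mem hf 2) (nsmul_mem hg 2)) (M.sq_mem _)
  mul_mem' := by
    rintro f g ⟨N, hf⟩ ⟨N', hg⟩
    refine ⟨N' * N, ?_⟩
    have hdecomp : ((N' * N : ℕ) : R) - (f * g) ^ 2 = f ^ 2 * (N' - g ^ 2) + N' • (N - f ^ 2) := by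
      rw [nsmul_eq_mul]
      push_cast
      ring
    rw [hdecomp]
    exact add_mem (M.sq_mul_mem f hg) (nsmul_mem hf N')
  algebraMap_mem' c := by
    refine ⟨⌈c ^ 2⌉₊, ?_⟩
    rw [← map_natCast (algebraMap ℝ R), ← map_pow, ← map_sub]
    exact M.algebraMap_mem (sub_nonneg.2 (Nat.le_ceil _))

variable {M}

theorem mem_boundedSubalgebra_of_add_mem_of_sub_mem {N : ℕ} (hN : N ≠ 0) {f : R} (hadd : N + f ∈ M)
    (hsub : N - f ∈ M) : f ∈ M.boundedSubalgebra := by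
  refine ⟨N ^ 2, ?_⟩
  have hdecomp : ((N ^ 2 : ℕ) : R) - f ^ 2 =
      (2 * N : ℝ)⁻¹ • ((N + f) ^ 2 * (N - f) + (N - f) ^ 2 * (N + f)) := by
    rw [eq_inv_smul_iff₀ (by positivity)]
    push_cast
    algebra
  rw [hdecomp]
  exact M.smul_mem (by positivity) (add_mem (M.sq_mul_mem _ hsub) (M.sq_mul_mem _ hadd))

/-- If `B u u` vanishes modulo the support then, for `p = -(1 + B v v) / 2` and `b = B u v`, the
value `B (p • u + b • v) (p • u + b • v) ∈ M` is congruent to `-b ^ 2`. -/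
theorem apply_mem_support_of_apply_self_mem_support (hrad : M.support.IsRadical) {P : Type*}
    [AddCommGroup P] [Module R P] {B : LinearMap.BilinForm R P} (hB : B.IsSymm)
    (hBM : ∀ v, B v v ∈ M) {u : P} (hu : B u u ∈ M.support) (v : P) : B u v ∈ M.support := by
  set b := B u v with hb
  let p : R := (-1 / 2 : ℝ) • (1 + B v v)
  have hexpand : B (p • u + b • v) (p • u + b • v) = p ^ 2 * B u u - b ^ 2 := by
    simp only [map_add, map_smul, LinearMap.add_apply, LinearMap.smul_apply, smul_eq_mul,
      hB.eq v u, ← hb, p]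
    algebra
  have hneg : -b ^ 2 ∈ M := by
    have h := add_mem (hBM (p • u + b • v)) (M.support.mul_mem_left (p ^ 2) hu).2
    convert h using 1
    rw [hexpand]
    ring
  exact hrad ⟨2, M.sq_mem b, hneg⟩

section Saturation

variable (M)

/-- The ideal of those `g` all of whose multiples `h * g` are infinitesimally nonnegative with
respect to `M`. -/
def infinitesimals : Ideal R where
  carrier := {g | ∀ (h : R) (ε : ℝ), 0 < ε → h * g + algebraMap ℝ R ε ∈ M}
  zero_mem' h ε hε := by simpa using M.algebraMap_mem hε.le
  add_mem' {f g} hf hg h ε hε := by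
    have hdecomp : h * (f + g) + algebraMap ℝ R ε =
        h * f + algebraMap ℝ R (ε / 2) + (h * g + algebraMap ℝ R (ε / 2)) := by algebra
    rw [hdecomp]
    exact add_mem (hf h _ (half_pos hε)) (hg h _ (half_pos hε))
  smul_mem' c g hg h ε hε := by simpa [mul_assoc] using hg (h * c) ε hε

/-- The quadratic module `M + I`, where `I` is the ideal of infinitesimals of `M`. -/
def saturation : QuadraticModule R where
  __ := M.toAddSubmonoid ⊔ M.infinitesimals.toAddSubmonoid
  one_mem' := AddSubmonoid.mem_sup_left (one_mem M)
  sq_mul_mem' a f hf := by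
    obtain ⟨m, hm, g, hg, rfl⟩ := AddSubmonoid.mem_sup.1 hf
    rw [mul_add]
    exact AddSubmonoid.add_mem_sup (M.sq_mul_mem a hm) (M.infinitesimals.mul_mem_left _ hg)

theorem le_saturation : M ≤ M.saturation := fun _ => AddSubmonoid.mem_sup_left

variable {M}

theorem add_algebraMap_mem_of_mem_saturation {f : R} (hf : f ∈ M.saturation) {ε : ℝ}
    (hε : 0 < ε) : f + algebraMap ℝ R ε ∈ M := by
  obtain ⟨m, hm, g, hg, rfl⟩ := AddSubmonoid.mem_sup.1 hf
  rw [add_assoc]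
  exact add_mem hm (by simpa using hg 1 ε hε)

theorem support_saturation : M.saturation.support = M.infinitesimals := by
  refine le_antisymm (fun f hf h ε hε => ?_) fun f hf => ?_
  · exact add_algebraMap_mem_of_mem_saturation (M.saturation.support.mul_mem_left h hf).1 hε
  · exact ⟨AddSubmonoid.mem_sup_right hf, AddSubmonoid.mem_sup_right (M.infinitesimals.neg_mem hf)⟩

theorem isRadical_support_saturation : M.saturation.support.IsRadical := by
  rw [Ideal.isRadical_iff_pow_one_lt 2 one_lt_two]
  intro f hf
  rw [support_saturation]
  intro h ε hε
  have hdecomp : h * f + algebraMap ℝ R ε =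
      (2 * ε)⁻¹ • ((h * f + algebraMap ℝ R ε) ^ 2 + h ^ 2 * -f ^ 2) + algebraMap ℝ R (ε / 2) := by
    rw [← sub_eq_iff_eq_add, eq_inv_smul_iff₀ (by positivity)]
    algebra
  rw [hdecomp]
  exact add_algebraMap_mem_of_mem_saturation (M.saturation.smul_mem (by positivity)
    (add_mem (M.saturation.sq_mem _) (M.saturation.sq_mul_mem h hf.2))) (half_pos hε)

end Saturation

end QuadraticModule

section Pencil

variable {n m : ℕ}

/-- The affine polynomial with coefficient vector `y`, where `y 0` is the constant coefficient and
`y i.succ` the coefficient of `X i`. -/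
noncomputable def affinePoly (n : ℕ) : (Fin (n + 1) → ℝ) →ₗ[ℝ] MvPolynomial (Fin n) ℝ :=
  Fintype.linearCombination ℝ (Fin.cons 1 X)

theorem affinePoly_single_zero (c : ℝ) : affinePoly n (Pi.single 0 c) = algebraMap ℝ _ c := by
  simp [affinePoly, smul_eq_C_mul, algebraMap_eq]

theorem affinePoly_single_succ (i : Fin n) (c : ℝ) :
    affinePoly n (Pi.single i.succ c) = c • X i := by
  simp [affinePoly]

theorem eval_affinePoly (x : Fin n → ℝ) (y : Fin (n + 1) → ℝ) :
    eval x (affinePoly n y) = y 0 + ∑ i, x i * y i.succ := by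
  simp [affinePoly, Fintype.linearCombination_apply, Fin.sum_univ_succ, mul_comm]

theorem exists_forall_apply_eq_mul_eval_affinePoly {φ : (Fin (n + 1) → ℝ) →ₗ[ℝ] ℝ}
    (hφ : φ (Pi.single 0 1) ≠ 0) :
    ∃ x, ∀ y, φ y = φ (Pi.single 0 1) * eval x (affinePoly n y) := by
  refine ⟨fun i => φ (Pi.single i.succ 1) / φ (Pi.single 0 1), fun y => ?_⟩
  conv_lhs => rw [pi_eq_sum_univ' y, map_sum, Fin.sum_univ_succ]
  simp only [map_smul, smul_eq_mul, eval_affinePoly, mul_add, Finset.mul_sum]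
  congr 1
  · exact mul_comm _ _
  · exact Finset.sum_congr rfl fun i _ => by field_simp

variable (A : Fin (n + 1) → Matrix (Fin m) (Fin m) ℝ)

/-- The bilinear form `(v, w) ↦ vᵀ L w` on constant vectors, with values the coefficient vectors of
affine polynomials. -/
noncomputable def pencilForm : (Fin m → ℝ) →ₗ[ℝ] (Fin m → ℝ) →ₗ[ℝ] (Fin (n + 1) → ℝ) :=
  LinearMap.mk₂ ℝ (fun v w i => v ⬝ᵥ A i *ᵥ w)
    (fun _ _ _ => funext fun _ => add_dotProduct _ _ _)
    (fun _ _ _ => funext fun _ => smul_dotProduct _ _ _)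
    (fun _ _ _ => funext fun _ => by rw [mulVec_add, dotProduct_add]; rfl)
    (fun _ _ _ => funext fun _ => by rw [mulVec_smul, dotProduct_smul]; rfl)

theorem eval_affinePoly_pencilForm (x : Fin n → ℝ) (v w : Fin m → ℝ) :
    eval x (affinePoly n (pencilForm A v w)) = v ⬝ᵥ pencilEval A x *ᵥ w := by
  simp [eval_affinePoly, pencilEval, pencilForm, add_mulVec, sum_mulVec, smul_mulVec,
    dotProduct_add, dotProduct_sum]

theorem vLv_eq_toBilin' (v : Fin m → MvPolynomial (Fin n) ℝ) :
    vLv A v = toBilin' (pencilPoly A) v v :=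
  (toBilin'_apply ..).symm

theorem eval_toBilin'_pencilPoly (x : Fin n → ℝ) (v w : Fin m → MvPolynomial (Fin n) ℝ) :
    eval x (toBilin' (pencilPoly A) v w) =
      (fun a => eval x (v a)) ⬝ᵥ pencilEval A x *ᵥ fun a => eval x (w a) := by
  simp [toBilin'_apply', pencilPoly, pencilEval, dotProduct, mulVec, Matrix.sum_apply]

theorem toBilin'_pencilPoly_C (v w : Fin m → ℝ) :
    toBilin' (pencilPoly A) (fun a => C (v a)) (fun a => C (w a)) =
      affinePoly n (pencilForm A v w) := by
  refine MvPolynomial.funext fun x => ?_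
  simp [eval_toBilin'_pencilPoly, eval_affinePoly_pencilForm]

/-- The quadratic module `M_L` of the pencil `L`. -/
def pencilModule : QuadraticModule (MvPolynomial (Fin n) ℝ) where
  carrier := {p | memQM A p}
  zero_mem' := ⟨0, 0, Fin.elim0, Fin.elim0, by simp⟩
  one_mem' := ⟨1, 0, 1, Fin.elim0, by simp⟩
  add_mem' := by
    rintro _ _ ⟨k, r, q, v, rfl⟩ ⟨k', r', q', v', rfl⟩
    refine ⟨k + k', r + r', Fin.append q q', Fin.append v v', ?_⟩
    simp only [Fin.sum_univ_add, Fin.append_left, Fin.append_right]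
    ring
  sq_mul_mem' := by
    rintro a _ ⟨k, r, q, v, rfl⟩
    refine ⟨k, r, a • q, a • v, ?_⟩
    simp only [mul_add, Finset.mul_sum, mul_pow, vLv_eq_toBilin', Pi.smul_apply, map_smul,
      LinearMap.smul_apply, smul_eq_mul, sq a, mul_assoc]

theorem toBilin'_pencilPoly_self_mem_pencilModule (v : Fin m → MvPolynomial (Fin n) ℝ) :
    toBilin' (pencilPoly A) v v ∈ pencilModule A :=
  ⟨0, 1, Fin.elim0, fun _ => v, by simp [vLv_eq_toBilin']⟩

theorem archimedeanQM_iff_boundedSubalgebra_eq_top :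
    archimedeanQM A ↔ (pencilModule A).boundedSubalgebra = ⊤ := by
  rw [Algebra.eq_top_iff]
  rfl

variable {A}

theorem eval_nonneg_of_mem_pencilModule {p : MvPolynomial (Fin n) ℝ} (hp : p ∈ pencilModule A)
    {x : Fin n → ℝ} (hx : x ∈ specSet A) : 0 ≤ eval x p := by
  obtain ⟨k, r, q, v, rfl⟩ := hp
  simp only [map_add, map_sum, map_pow, vLv_eq_toBilin', eval_toBilin'_pencilPoly]
  refine add_nonneg (Finset.sum_nonneg fun _ _ => sq_nonneg _) (Finset.sum_nonneg fun _ _ => ?_)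
  exact PosSemidef.dotProduct_mulVec_nonneg hx _

theorem isBounded_specSet_of_archimedeanQM (h : archimedeanQM A) :
    Bornology.IsBounded (specSet A) := by
  rw [← Bornology.forall_isBounded_image_eval_iff]
  intro i
  obtain ⟨N, hN⟩ := h (X i)
  refine (Metric.isBounded_Icc (-√N) √N).subset ?_
  rintro _ ⟨x, hx, rfl⟩
  have hxN : 0 ≤ N - x i ^ 2 := by simpa using eval_nonneg_of_mem_pencilModule hN hx
  exact abs_le.1 (Real.abs_le_sqrt (sub_nonneg.1 hxN))

theorem isSymm_pencilEval (hsymm : ∀ i, (A i).IsSymm) (x : Fin n → ℝ) :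
    (pencilEval A x).IsSymm := by
  simp [IsSymm, pencilEval, transpose_sum, fun i => (hsymm i).eq]

theorem isSymm_pencilPoly (hsymm : ∀ i, (A i).IsSymm) : (pencilPoly A).IsSymm := by
  ext1 a b
  simp [pencilPoly, fun i => (hsymm i).apply a b]

theorem pencilForm_comm (hsymm : ∀ i, (A i).IsSymm) (v w : Fin m → ℝ) :
    pencilForm A v w = pencilForm A w v := by
  ext i
  simp only [pencilForm, LinearMap.mk₂_apply]
  rw [dotProduct_mulVec, ← mulVec_transpose, (hsymm i).eq, dotProduct_comm]

theorem mem_specSet_of_forall_nonneg (hsymm : ∀ i, (A i).IsSymm) {x : Fin n → ℝ}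
    (hx : ∀ v, 0 ≤ eval x (affinePoly n (pencilForm A v v))) : x ∈ specSet A := by
  refine PosSemidef.of_dotProduct_mulVec_nonneg ?_ fun v => ?_
  · exact isHermitian_iff_isSymm.2 (isSymm_pencilEval hsymm x)
  · rw [← eval_affinePoly_pencilForm]
    exact hx v

theorem affinePoly_mem_of_nonneg_on_specSet (hsymm : ∀ i, (A i).IsSymm)
    {M : QuadraticModule (MvPolynomial (Fin n) ℝ)} (hM : pencilModule A ≤ M)
    (hrad : M.support.IsRadical) {p : Fin (n + 1) → ℝ}
    (hp : ∀ x ∈ specSet A, 0 ≤ eval x (affinePoly n p)) : affinePoly n p ∈ M := by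
  by_contra hpM
  have hneg : -1 ∉ M := fun h => hpM (M.mem_of_neg_one_mem h _)
  let K : PointedCone ℝ (Fin (n + 1) → ℝ) := M.toPointedCone.comap (affinePoly n)
  have hBK (v : Fin m → ℝ) : pencilForm A v v ∈ K := by
    change affinePoly n _ ∈ M
    rw [← toBilin'_pencilPoly_C]
    exact hM (toBilin'_pencilPoly_self_mem_pencilModule A _)
  have hlineal {y : Fin (n + 1) → ℝ} : y ∈ K.lineal ↔ affinePoly n y ∈ M.support := by
    rw [PointedCone.mem_lineal, QuadraticModule.mem_support, ← map_neg]
    rfl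
  have hker (v : Fin m → ℝ) (hv : pencilForm A v v ∈ K.lineal) (w : Fin m → ℝ) :
      pencilForm A v w ∈ K.lineal := by
    rw [hlineal, ← toBilin'_pencilPoly_C] at hv ⊢
    exact QuadraticModule.apply_mem_support_of_apply_self_mem_support hrad
      (isSymm_toBilin'_iff_isSymm.2 (isSymm_pencilPoly hsymm))
      (fun u => hM (toBilin'_pencilPoly_self_mem_pencilModule A u)) hv _
  have he : Pi.single 0 1 ∈ K := by
    change affinePoly n _ ∈ M
    rw [affinePoly_single_zero, map_one]
    exact one_mem M
  have he' : -Pi.single 0 1 ∉ K := by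
    change affinePoly n _ ∉ M
    rwa [map_neg, affinePoly_single_zero, map_one]
  obtain ⟨φ, hφe, hφp, hφ⟩ :=
    exists_pos_neg_nonneg_of_notMem (pencilForm_comm hsymm) hBK hker he he' hpM
  obtain ⟨x, hx⟩ := exists_forall_apply_eq_mul_eval_affinePoly (φ := φ.toLinearMap) hφe.ne'
  have hxS : x ∈ specSet A := mem_specSet_of_forall_nonneg hsymm fun v =>
    nonneg_of_mul_nonneg_right (hx (pencilForm A v v) ▸ hφ v) hφe
  exact hφp.not_ge ((hx p).symm ▸ mul_nonneg hφe.le (hp x hxS))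

theorem affinePoly_add_algebraMap_mem_pencilModule (hsymm : ∀ i, (A i).IsSymm)
    {p : Fin (n + 1) → ℝ} (hp : ∀ x ∈ specSet A, 0 ≤ eval x (affinePoly n p)) {ε : ℝ}
    (hε : 0 < ε) : affinePoly n p + algebraMap ℝ _ ε ∈ pencilModule A :=
  QuadraticModule.add_algebraMap_mem_of_mem_saturation (affinePoly_mem_of_nonneg_on_specSet hsymm
    (pencilModule A).le_saturation QuadraticModule.isRadical_support_saturation hp) hε

theorem X_mem_boundedSubalgebra_of_isBounded_specSet (hsymm : ∀ i, (A i).IsSymm)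
    (hb : Bornology.IsBounded (specSet A)) (i : Fin n) :
    X i ∈ (pencilModule A).boundedSubalgebra := by
  obtain ⟨r, hr⟩ := hb.exists_norm_le
  obtain ⟨N, hN⟩ := exists_nat_ge r
  have haff (c : ℝ) (hc : |c| = 1) : ((N + 1 : ℕ) : MvPolynomial (Fin n) ℝ) + c • X i ∈
      pencilModule A := by
    have h := affinePoly_add_algebraMap_mem_pencilModule hsymm
      (p := Pi.single 0 (N : ℝ) + Pi.single i.succ c) (fun x hx => ?_) one_pos
    · rw [map_add, affinePoly_single_zero, affinePoly_single_succ] at h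
      convert h using 1
      push_cast
      exact add_right_comm _ _ _
    · have hxi : |c * x i| ≤ N := by
        rw [abs_mul, hc, one_mul]
        exact (norm_le_pi_norm x i).trans ((hr x hx).trans hN)
      simpa [affinePoly_single_zero, affinePoly_single_succ, algebraMap_eq] using
        neg_le_iff_add_nonneg'.1 (neg_le_of_abs_le hxi)
  exact QuadraticModule.mem_boundedSubalgebra_of_add_mem_of_sub_mem N.succ_ne_zero
    (by simpa using haff 1 abs_one) (by simpa [sub_eq_add_neg] using haff (-1) (by simp))

theorem archimedeanQM_of_isBounded_specSet (hsymm : ∀ i, (A i).IsSymm)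
    (hb : Bornology.IsBounded (specSet A)) : archimedeanQM A := by
  rw [archimedeanQM_iff_boundedSubalgebra_eq_top, eq_top_iff, ← adjoin_range_X]
  refine Algebra.adjoin_le ?_
  rintro _ ⟨i, rfl⟩
  exact X_mem_boundedSubalgebra_of_isBounded_specSet hsymm hb i

end Pencil

/-- **Theorem.** For a linear pencil `L`, the spectrahedron `S_L` is bounded if and only if
the quadratic module `M_L` is archimedean. -/
theorem spectrahedron_bounded_iff_archimedean
    (n m : ℕ) (A : Fin (n+1) → Matrix (Fin m) (Fin m) ℝ)
    (hsymm : ∀ i, (A i).IsSymm) :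
    Bornology.IsBounded (specSet A) ↔ archimedeanQM A :=
  ⟨archimedeanQM_of_isBounded_specSet hsymm, isBounded_specSet_of_archimedeanQM⟩
end

section
/- (Sturm's lemma, Farkas lemma for SDP.) A linear pencil L is strongly infeasible if and only if −1 belongs to the convex cone C_L associated to L. -/
open MvPolynomial Matrix

/-- The Frobenius distance between two real matrices. (All norms on the finite-dimensional
space of symmetric matrices are equivalent, so positivity of the distance between two sets
does not depend on the choice of norm.) -/
noncomputable def frobDist {m : ℕ} (M N : Matrix (Fin m) (Fin m) ℝ) : ℝ :=
  Real.sqrt (∑ a, ∑ b, (M a b - N a b)^2)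

/-- A linear pencil `L` is strongly infeasible if the distance between the affine set
`{L(x) ∣ x ∈ ℝⁿ}` and the cone of positive semidefinite matrices is strictly positive. -/
def stronglyInfeasible {n m : ℕ} (A : Fin (n+1) → Matrix (Fin m) (Fin m) ℝ) : Prop :=
  ∃ ε > (0:ℝ), ∀ (x : Fin n → ℝ) (B : Matrix (Fin m) (Fin m) ℝ), B.PosSemidef →
    ε ≤ frobDist (pencilEval A x) B

/-- Membership in the convex cone `C_L = {c + Σᵢ uᵢᵀ L uᵢ ∣ c ≥ 0, uᵢ ∈ ℝᵐ}`. -/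
def memC {n m : ℕ} (A : Fin (n+1) → Matrix (Fin m) (Fin m) ℝ)
    (p : MvPolynomial (Fin n) ℝ) : Prop :=
  ∃ (c : ℝ), 0 ≤ c ∧ ∃ (k : ℕ) (u : Fin k → Fin m → ℝ),
    p = MvPolynomial.C c +
      ∑ i, ∑ a, ∑ b, MvPolynomial.C (u i a) * pencilPoly A a b * MvPolynomial.C (u i b)

/-!
Strong infeasibility says that `A 0` lies outside the closure of the convex cone
`span {A 1, ..., A n} + PSD`. By Hahn-Banach this happens exactly when some linear functional
is nonnegative on the positive semidefinite cone, vanishes on `A 1, ..., A n` and is negative at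
`A 0`. The positive semidefinite cone is self-dual, so on symmetric matrices such a functional is
`M ↦ tr (H * M)` with `H` positive semidefinite. Factoring `H = Dᵀ * D`, the rows `uᵢ` of `D`
satisfy `∑ uᵢᵀ L uᵢ = tr (H * L) = tr (H * A 0) < 0`, and rescaling `H` turns this constant
into `-1`.
-/

section Farkas

theorem notMem_closure_sup_iff_exists_strongDual {E : Type*} [AddCommGroup E] [TopologicalSpace E]
    [IsTopologicalAddGroup E] [Module ℝ E] [ContinuousSMul ℝ E] [LocallyConvexSpace ℝ E]
    (V : Submodule ℝ E) (C : PointedCone ℝ E) (a : E) :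
    a ∉ closure ((V ⊔ C : PointedCone ℝ E) : Set E) ↔
      ∃ f : StrongDual ℝ E, (∀ b ∈ C, 0 ≤ f b) ∧ (∀ v ∈ V, f v = 0) ∧ f a < 0 := by
  constructor
  · intro ha
    obtain ⟨f, hf, hfa⟩ := ProperCone.hyperplane_separation_point
      (Submodule.closure (V ⊔ C : PointedCone ℝ E)) ha
    have hV (v : E) (hv : v ∈ V) : 0 ≤ f v :=
      hf v (subset_closure (Submodule.mem_sup_left hv))
    refine ⟨f, fun b hb ↦ hf b (subset_closure (Submodule.mem_sup_right hb)),
      fun v hv ↦ (hV v hv).antisymm' ?_, hfa⟩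
    simpa using hV (-v) (V.neg_mem hv)
  · rintro ⟨f, hC, hV, hfa⟩ ha
    have hsub : ((V ⊔ C : PointedCone ℝ E) : Set E) ⊆ {x | 0 ≤ f x} := by
      intro x hx
      obtain ⟨v, hv, b, hb, rfl⟩ := Submodule.mem_sup.mp hx
      simpa [hV v hv] using hC b hb
    exact hfa.not_ge (closure_minimal hsub (isClosed_le continuous_const f.continuous) ha)

theorem exists_forall_le_dist_iff_notMem_closure_sup {E : Type*} [SeminormedAddCommGroup E]
    [Module ℝ E] (V : Submodule ℝ E) (C : PointedCone ℝ E) (a : E) :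
    (∃ ε > 0, ∀ v ∈ V, ∀ b ∈ C, ε ≤ dist (a + v) b) ↔
      a ∉ closure ((V ⊔ C : PointedCone ℝ E) : Set E) := by
  have dist_add (v b : E) : dist (a + v) b = dist a (-v + b) := by
    simp only [dist_eq_norm]
    congr 1
    abel
  simp only [Metric.mem_closure_iff, SetLike.mem_coe, Submodule.mem_sup]
  push Not
  refine exists_congr fun ε ↦ and_congr_right fun _ ↦ ⟨?_, fun h v hv b hb ↦ ?_⟩
  · rintro h _ ⟨v, hv, b, hb, rfl⟩
    simpa [dist_add] using h (-v) (V.neg_mem hv) b hb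
  · rw [dist_add]
    exact h _ ⟨-v, V.neg_mem hv, b, hb, rfl⟩

end Farkas

section PosSemidef

/-- The cone of positive semidefinite real matrices, bundled as a `PointedCone` so that it can be
added to the span of the coefficients of a pencil. -/
def posSemidefCone (ι : Type*) : PointedCone ℝ (Matrix ι ι ℝ) where
  carrier := {B | B.PosSemidef}
  add_mem' := .add
  zero_mem' := .zero
  smul_mem' c _ hB := hB.smul c.2

theorem mem_posSemidefCone {ι : Type*} {B : Matrix ι ι ℝ} :
    B ∈ posSemidefCone ι ↔ B.PosSemidef := .rfl

variable {ι κ R 𝕜 : Type*} [Fintype ι] [Fintype κ] [RCLike 𝕜]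

theorem exists_forall_eq_trace_mul [CommSemiring R] (f : Matrix ι ι R →ₗ[R] R) :
    ∃ K : Matrix ι ι R, ∀ M, f M = trace (K * M) := by
  classical
  let K : Matrix ι ι R := of fun a b ↦ f (single b a 1)
  have hfK : f = traceLinearMap ι R R ∘ₗ LinearMap.mulLeft R K := by
    refine ext_linearMap R fun a b ↦ LinearMap.ext_ring ?_
    simp [K, trace_mul_single]
  exact ⟨K, LinearMap.congr_fun hfK⟩

theorem trace_transpose_mul_self_mul [CommSemiring R] (D : Matrix κ ι R) (M : Matrix ι ι R) :
    trace (Dᵀ * D * M) = ∑ i, ∑ a, ∑ b, D i a * M a b * D i b := by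
  rw [trace_mul_cycle, trace_mul_cycle]
  refine Finset.sum_congr rfl fun i _ ↦ ?_
  simp only [diag_apply, mul_apply, transpose_apply, Finset.sum_mul]
  exact Finset.sum_comm

theorem trace_mul_vecMulVec [CommSemiring R] (H : Matrix κ ι R) (v : ι → R) (w : κ → R) :
    trace (H * vecMulVec v w) = w ⬝ᵥ H *ᵥ v := by
  rw [mul_vecMulVec, trace_vecMulVec, dotProduct_comm]

open scoped ComplexOrder MatrixOrder in
theorem posSemidef_iff_exists_conjTranspose_mul_self {H : Matrix ι ι 𝕜} :
    H.PosSemidef ↔ ∃ D : Matrix ι ι 𝕜, H = Dᴴ * D := by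
  classical
  rw [← nonneg_iff_posSemidef, CStarAlgebra.nonneg_iff_eq_star_mul_self]
  simp only [star_eq_conjTranspose]

open scoped ComplexOrder in
theorem trace_mul_nonneg_of_posSemidef {H B : Matrix ι ι 𝕜} (hH : H.PosSemidef)
    (hB : B.PosSemidef) : 0 ≤ trace (H * B) := by
  obtain ⟨D, rfl⟩ := posSemidef_iff_exists_conjTranspose_mul_self.mp hH
  rw [trace_mul_cycle, trace_mul_cycle]
  exact (hB.mul_mul_conjTranspose_same D).trace_nonneg

theorem exists_posSemidef_forall_isSymm_eq_trace_mul (f : Matrix ι ι ℝ →ₗ[ℝ] ℝ)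
    (hf : ∀ B : Matrix ι ι ℝ, B.PosSemidef → 0 ≤ f B) :
    ∃ H : Matrix ι ι ℝ, H.PosSemidef ∧ ∀ M : Matrix ι ι ℝ, M.IsSymm → f M = trace (H * M) := by
  obtain ⟨K, hK⟩ := exists_forall_eq_trace_mul f
  let H : Matrix ι ι ℝ := (1 / 2 : ℝ) • (K + Kᵀ)
  have hH (M : Matrix ι ι ℝ) (hM : M.IsSymm) : f M = trace (H * M) := by
    have htranspose : trace (Kᵀ * M) = trace (K * M) := by
      rw [← trace_transpose, transpose_mul, transpose_transpose, hM.eq, trace_mul_comm]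
    simp only [hK, H, smul_mul, add_mul, trace_smul, trace_add, htranspose, smul_eq_mul]
    ring
  refine ⟨H, .of_dotProduct_mulVec_nonneg ?_ fun v ↦ ?_, hH⟩
  · simp [IsHermitian, H, conjTranspose_eq_transpose_of_trivial, add_comm]
  · have hv : (vecMulVec v v).PosSemidef := by simpa using posSemidef_vecMulVec_self_star v
    have hv_symm : (vecMulVec v v).IsSymm := by simp [IsSymm, transpose_vecMulVec]
    simpa [← trace_mul_vecMulVec, ← hH _ hv_symm] using hf _ hv

end PosSemidef

section Pencil

variable {n m : ℕ} (A : Fin (n + 1) → Matrix (Fin m) (Fin m) ℝ)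

theorem eval_pencilPoly (x : Fin n → ℝ) (a b : Fin m) :
    eval x (pencilPoly A a b) = pencilEval A x a b := by
  simp [pencilPoly, pencilEval, Matrix.sum_apply]

theorem trace_mul_pencilEval (H : Matrix (Fin m) (Fin m) ℝ) (x : Fin n → ℝ) :
    trace (H * pencilEval A x) = trace (H * A 0) + ∑ i, x i * trace (H * A i.succ) := by
  simp [pencilEval, mul_add, Finset.mul_sum, trace_sum]

theorem memC_iff_exists_posSemidef (p : MvPolynomial (Fin n) ℝ) :
    memC A p ↔ ∃ c : ℝ, 0 ≤ c ∧ ∃ H : Matrix (Fin m) (Fin m) ℝ, H.PosSemidef ∧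
      ∀ x, eval x p = c + trace (H * pencilEval A x) := by
  have eval_cone {k : ℕ} (c : ℝ) (D : Matrix (Fin k) (Fin m) ℝ) (x : Fin n → ℝ) :
      eval x (C c + ∑ i, ∑ a, ∑ b, C (D i a) * pencilPoly A a b * C (D i b)) =
        c + trace (Dᵀ * D * pencilEval A x) := by
    simp [trace_transpose_mul_self_mul, eval_pencilPoly]
  constructor
  · rintro ⟨c, hc, k, u, rfl⟩
    exact ⟨c, hc, (of u)ᵀ * of u, posSemidef_conjTranspose_mul_self (of u),
      eval_cone c (of u)⟩
  · rintro ⟨c, hc, H, hH, hp⟩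
    obtain ⟨D, rfl⟩ := posSemidef_iff_exists_conjTranspose_mul_self.mp hH
    rw [conjTranspose_eq_transpose_of_trivial] at hp
    exact ⟨c, hc, m, D, MvPolynomial.funext fun x ↦ by rw [hp, eval_cone]⟩

theorem neg_one_memC_iff_exists_posSemidef :
    memC A (-1) ↔ ∃ H : Matrix (Fin m) (Fin m) ℝ, H.PosSemidef ∧
      (∀ i : Fin n, trace (H * A i.succ) = 0) ∧ trace (H * A 0) < 0 := by
  simp only [memC_iff_exists_posSemidef, trace_mul_pencilEval, map_neg, map_one]
  constructor
  · rintro ⟨c, hc, H, hH, hconst⟩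
    have h_zero : -1 = c + trace (H * A 0) := by simpa using hconst 0
    refine ⟨H, hH, fun i ↦ ?_, by linarith⟩
    have h_single : -1 = c + (trace (H * A 0) + trace (H * A i.succ)) := by
      simpa [Pi.single_apply] using hconst (Pi.single i 1)
    linarith
  · rintro ⟨H, hH, h_succ, h_neg⟩
    refine ⟨0, le_rfl, (-trace (H * A 0))⁻¹ • H, hH.smul (by simpa using h_neg.le), fun x ↦ ?_⟩
    simp [h_succ, inv_neg, inv_mul_cancel₀ h_neg.ne]

open scoped Matrix.Norms.Frobenius

theorem frobDist_eq_dist (M N : Matrix (Fin m) (Fin m) ℝ) : frobDist M N = dist M N := by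
  simp [frobDist, dist_eq_norm, frobenius_norm_def, Real.sqrt_eq_rpow]

theorem stronglyInfeasible_iff_forall_le_dist :
    stronglyInfeasible A ↔ ∃ ε > 0, ∀ M ∈ Submodule.span ℝ (Set.range fun i : Fin n ↦ A i.succ),
      ∀ B ∈ posSemidefCone (Fin m), ε ≤ dist (A 0 + M) B := by
  simp only [stronglyInfeasible, pencilEval, frobDist_eq_dist, mem_posSemidefCone,
    Submodule.mem_span_range_iff_exists_fun, forall_exists_index, forall_apply_eq_imp_iff]

theorem stronglyInfeasible_iff_exists_posSemidef (hsymm : ∀ i, (A i).IsSymm) :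
    stronglyInfeasible A ↔ ∃ H : Matrix (Fin m) (Fin m) ℝ, H.PosSemidef ∧
      (∀ i : Fin n, trace (H * A i.succ) = 0) ∧ trace (H * A 0) < 0 := by
  rw [stronglyInfeasible_iff_forall_le_dist, exists_forall_le_dist_iff_notMem_closure_sup,
    notMem_closure_sup_iff_exists_strongDual]
  constructor
  · rintro ⟨f, hf_nonneg, hf_span, hf_neg⟩
    obtain ⟨H, hH, hfH⟩ := exists_posSemidef_forall_isSymm_eq_trace_mul f.toLinearMap hf_nonneg
    refine ⟨H, hH, fun i ↦ ?_, (hfH _ (hsymm 0)).symm.trans_lt hf_neg⟩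
    exact (hfH _ (hsymm i.succ)).symm.trans (hf_span _ (Submodule.subset_span ⟨i, rfl⟩))
  · rintro ⟨H, hH, h_succ, h_neg⟩
    let f : Matrix (Fin m) (Fin m) ℝ →ₗ[ℝ] ℝ := traceLinearMap _ ℝ ℝ ∘ₗ LinearMap.mulLeft ℝ H
    have hf_span : Submodule.span ℝ (Set.range fun i : Fin n ↦ A i.succ) ≤ LinearMap.ker f := by
      rw [Submodule.span_le]
      rintro _ ⟨i, rfl⟩
      exact h_succ i
    exact ⟨f.toContinuousLinearMap, fun B hB ↦ trace_mul_nonneg_of_posSemidef hH hB, hf_span, h_neg⟩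

end Pencil

/-- **Sturm's lemma (Farkas' lemma for SDP).** A linear pencil `L` is strongly infeasible
if and only if `-1 ∈ C_L`. -/
theorem stronglyInfeasible_iff_neg_one_mem_cone
    (n m : ℕ) (A : Fin (n+1) → Matrix (Fin m) (Fin m) ℝ)
    (hsymm : ∀ i, (A i).IsSymm) :
    stronglyInfeasible A ↔ memC A (-1) := by
  rw [stronglyInfeasible_iff_exists_posSemidef A hsymm, neg_one_memC_iff_exists_posSemidef]
end
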